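/- For every even k ≥ 4 and n ≥ 3k, the online Ramsey number satisfies r̃(C_k, C_n) ≤ 2n + 20k. -/

import Mathlib

open SimpleGraph

/-- A board state: the set of red edges and the set of blue edges. -/
abbrev Board : Type := Set (Sym2 ℕ) × Set (Sym2 ℕ)

/-- The set of already colored edges of a board. -/
def Board.colored (B : Board) : Set (Sym2 ℕ) := B.1 ∪ B.2

/-- A Builder strategy selects an edge given the current board. -/
abbrev BuilderStrat : Type := Board → Sym2 ℕ

/-- A Painter strategy colors the selected edge (true = red, false = blue). -/
abbrev PainterStrat : Type := Board → Sym2 ℕ → Bool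

/-- The board after `t` rounds of play from `init`. -/
def playGame (b : BuilderStrat) (p : PainterStrat) (init : Board) : ℕ → Board
  | 0 => init
  | t + 1 =>
      let B := playGame b p init t
      let e := b B
      if p B e then (insert e B.1, B.2) else (B.1, insert e B.2)

/-- Builder's strategy is valid from `init`: along any play it always selects a
previously unselected non-loop edge. -/
def ValidFrom (b : BuilderStrat) (init : Board) : Prop :=
  ∀ p : PainterStrat, ∀ t : ℕ,
    ¬ (b (playGame b p init t)).IsDiag ∧
      b (playGame b p init t) ∉ (playGame b p init t).colored

/-- Builder can force the winning condition `W` within `t` rounds, starting from `init`. -/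
def BuilderWinsIn (init : Board) (W : Board → Prop) (t : ℕ) : Prop :=
  ∃ b : BuilderStrat, ValidFrom b init ∧
    ∀ p : PainterStrat, ∃ s, s ≤ t ∧ W (playGame b p init s)

/-- `G` contains a copy of `H`. -/
def HasCopy {α β : Type} (H : SimpleGraph α) (G : SimpleGraph β) : Prop :=
  ∃ f : α ↪ β, ∀ x y, H.Adj x y → G.Adj (f x) (f y)

/-- The red part of the board contains a copy of `H`. -/
def RedCopy {α : Type} (H : SimpleGraph α) (B : Board) : Prop :=
  HasCopy H (fromEdgeSet B.1)

/-- The blue part of the board contains a copy of `H`. -/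
def BlueCopy {α : Type} (H : SimpleGraph α) (B : Board) : Prop :=
  HasCopy H (fromEdgeSet B.2)

/-- The empty board. -/
def emptyBoard : Board := (∅, ∅)

/-- Winning condition: a red `C_k` or a blue `C_n`. -/
def WinCC (k n : ℕ) (B : Board) : Prop :=
  RedCopy (cycleGraph k) B ∨ BlueCopy (cycleGraph n) B

/-- Winning condition: a red `C_k` or a blue path on `n` vertices. -/
def WinCP (k n : ℕ) (B : Board) : Prop :=
  RedCopy (cycleGraph k) B ∨ BlueCopy (pathGraph n) B

/-- A board consisting of a single blue cycle on the vertices `0, …, m-1`. -/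
def blueCycleBoard (m : ℕ) : Board :=
  (∅, {e | ∃ i : ℕ, i < m ∧ e = s(i, (i + 1) % m)})

/-- A board consisting of a single blue path on the vertices `0, …, m-1`. -/
def bluePathBoard (m : ℕ) : Board :=
  (∅, {e | ∃ i : ℕ, i + 1 < m ∧ e = s(i, i + 1)})

/-!
Write `k = 2m`. Builder first forces a red `C_k` or a blue path on `n + 3m + 1` vertices within
`2n + 30m` rounds, and then turns this path into a blue `C_n` within `10m` rounds.

*From the path to the cycle.* Join the first `3m + 1` vertices of the blue path to its last ones by
edges spanning `n` or `n + 2` vertices of the path. A blue edge of the first kind completes a blue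
`C_n`, and one of the second kind a blue `C_{n+2}`, which Builder shortens by two crossing blue
chords. If all these edges are red, they form a ladder in which each of three further edges closes a
red `C_k` if it is red; otherwise these edges are blue chords that complete a `C_n`.

*Forcing the path.* Builder extends disjoint red and blue paths side by side, gaining a vertex every
two rounds. Once the red path has `2k - 4` vertices it is kept as a tool, and Builder grows a stack
of blue paths whose top he compares with a working path: a blue answer merges the two paths and a
red one extends the stack, so that each round adds a vertex or removes a path. In the finished stack
the ends of consecutive paths are joined in red. Therefore a red answer to an edge joining suitable
ends of paths at distance `k - 1` closes a red `C_k`, and blue answers link these paths until fewer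
than `k` remain. Now a vertex with red edges to two vertices of the stored red path at distance
`k - 2` closes a red `C_k`; this lets Builder merge three blue paths into two at a cost of five
rounds, until two paths are left. These are joined near their ends by a blue edge, unless a red
`C_k` alternating between them appears.
-/

/-- `Forces W t B`: moving on `B`, Builder can reach a board satisfying `W` within `t` rounds. This
is the game tree behind `BuilderWinsIn`, in a form that lets strategies be composed. -/
inductive Forces (W : Board → Prop) : ℕ → Board → Prop
  | win {t : ℕ} {B : Board} : W B → Forces W t B
  | ask {t : ℕ} {B : Board} (e : Sym2 ℕ) : ¬ e.IsDiag → e ∉ B.colored →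
      Forces W t (insert e B.1, B.2) → Forces W t (B.1, insert e B.2) → Forces W (t + 1) B

section Game

variable {V W : Board → Prop} {B : Board} {s t : ℕ}

theorem Forces.mono (h : Forces W s B) (hst : s ≤ t) : Forces W t B := by
  induction h generalizing t with
  | win h => exact .win h
  | ask e hd hc _ _ ihred ihblue =>
    obtain ⟨t, rfl⟩ : ∃ r, t = r + 1 := ⟨t - 1, by omega⟩
    exact .ask e hd hc (ihred (by omega)) (ihblue (by omega))

theorem Forces.bind (h : Forces V s B) (hV : ∀ B', B ≤ B' → V B' → Forces W t B') :
    Forces W (s + t) B := by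
  induction h with
  | win h => exact (hV _ le_rfl h).mono (by omega)
  | @ask s B e hd hc _ _ ihred ihblue =>
    have hred : B ≤ (insert e B.1, B.2) := ⟨Set.subset_insert _ _, subset_rfl⟩
    have hblue : B ≤ (B.1, insert e B.2) := ⟨subset_rfl, Set.subset_insert _ _⟩
    rw [add_right_comm]
    exact .ask e hd hc (ihred fun B' hB => hV B' (hred.trans hB))
      (ihblue fun B' hB => hV B' (hblue.trans hB))

theorem Forces.imp (h : Forces V t B) (hVW : ∀ B', B ≤ B' → V B' → W B') : Forces W t B :=
  h.bind (t := 0) fun B' hB hV => .win (hVW B' hB hV)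

theorem exists_notMem_colored (hB : B.colored.Finite) :
    ∃ e : Sym2 ℕ, ¬ e.IsDiag ∧ e ∉ B.colored := by
  have hinf : (Set.range fun i : ℕ => s(0, i + 1)).Infinite :=
    Set.infinite_range_of_injective fun i j hij => by simpa using hij
  obtain ⟨_, ⟨i, rfl⟩, he⟩ := hinf.exists_notMem_finite hB
  exact ⟨_, by simp, he⟩

theorem exists_optimal_move (W : Board → Prop) (hB : B.colored.Finite) :
    ∃ e : Sym2 ℕ, ¬ e.IsDiag ∧ e ∉ B.colored ∧ ∀ t, Forces W t B → ¬ W B →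
      ∃ s, t = s + 1 ∧ Forces W s (insert e B.1, B.2) ∧ Forces W s (B.1, insert e B.2) := by
  classical
  by_cases h : ∃ t, Forces W t B ∧ ¬ W B
  · obtain ⟨hforces, hnot⟩ := Nat.find_spec h
    have hmin : ∀ t, Forces W t B → Nat.find h ≤ t := fun t ht => Nat.find_min' h ⟨ht, hnot⟩
    generalize Nat.find h = t₀ at hforces hmin
    cases hforces with
    | win h => exact absurd h hnot
    | ask e hd hc hred hblue =>
      refine ⟨e, hd, hc, fun t ht _ => ?_⟩
      have := hmin t ht
      exact ⟨t - 1, by omega, hred.mono (by omega), hblue.mono (by omega)⟩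
  · obtain ⟨e, hd, hc⟩ := exists_notMem_colored hB
    exact ⟨e, hd, hc, fun t ht hnot => absurd ⟨t, ht, hnot⟩ h⟩

theorem playGame_succ_eq_or (b : BuilderStrat) (p : PainterStrat) (init : Board) (t : ℕ) :
    let B := playGame b p init t
    playGame b p init (t + 1) = (insert (b B) B.1, B.2) ∨
      playGame b p init (t + 1) = (B.1, insert (b B) B.2) := by
  simp only [playGame]
  split_ifs
  exacts [.inl rfl, .inr rfl]

theorem finite_colored_playGame (b : BuilderStrat) (p : PainterStrat) {init : Board}
    (hinit : init.colored.Finite) (t : ℕ) : (playGame b p init t).colored.Finite := by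
  induction t with
  | zero => exact hinit
  | succ t ih =>
    refine (ih.insert (b (playGame b p init t))).subset ?_
    rcases playGame_succ_eq_or b p init t with h | h <;> rw [h, Board.colored, Board.colored]
    · exact Set.insert_union.subset
    · exact Set.union_insert.subset

theorem Forces.builderWinsIn (hB : B.colored.Finite) (h : Forces W t B) : BuilderWinsIn B W t := by
  classical
  choose f hd hc hf using fun (B : Board) (hB : B.colored.Finite) => exists_optimal_move W hB
  let b : BuilderStrat := fun B => if hB : B.colored.Finite then f B hB else s(0, 1)
  have hb : ∀ p s, b (playGame b p B s) = f _ (finite_colored_playGame b p hB s) :=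
    fun p s => dif_pos _
  refine ⟨b, fun p s => hb p s ▸ ⟨hd _ _, hc _ _⟩, fun p => ?_⟩
  by_contra! hnot
  have forces_playGame : ∀ s ≤ t, Forces W (t - s) (playGame b p B s) := by
    intro s
    induction s with
    | zero => exact fun _ => h
    | succ s ih =>
      intro hs
      obtain ⟨r, hr, hred, hblue⟩ := hf _ _ _ (ih (by omega)) (hnot s (by omega))
      obtain rfl : r = t - (s + 1) := by omega
      rw [← hb] at hred hblue
      rcases playGame_succ_eq_or b p B s with h | h <;> rw [h] <;> assumption
  have hend := forces_playGame t le_rfl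
  rw [Nat.sub_self] at hend
  cases hend with
  | win h => exact hnot t le_rfl h

end Game

/-- The graph of red edges, so that `RedCopy H B` unfolds to `HasCopy H B.red`. -/
def Board.red (B : Board) : SimpleGraph ℕ := fromEdgeSet B.1

/-- The graph of blue edges, so that `BlueCopy H B` unfolds to `HasCopy H B.blue`. -/
def Board.blue (B : Board) : SimpleGraph ℕ := fromEdgeSet B.2

section Asking

variable {B B' : Board}

theorem Board.red_mono (h : B ≤ B') : B.red ≤ B'.red := fromEdgeSet_mono h.1

theorem Board.blue_mono (h : B ≤ B') : B.blue ≤ B'.blue := fromEdgeSet_mono h.2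

theorem forces_edge {x y : ℕ} (hxy : x ≠ y) :
    Forces (fun B' => B'.red.Adj x y ∨ B'.blue.Adj x y) 1 B := by
  by_cases hc : s(x, y) ∈ B.colored
  · exact .win (hc.imp (fun h => ⟨h, hxy⟩) fun h => ⟨h, hxy⟩)
  · exact .ask s(x, y) (by simpa using hxy) hc (.win (.inl ⟨Set.mem_insert _ _, hxy⟩))
      (.win (.inr ⟨Set.mem_insert _ _, hxy⟩))

theorem forces_blue_or_all_red {x y : ℕ → ℕ} {N : ℕ} (hxy : ∀ i < N, x i ≠ y i) :
    Forces (fun B' => (∃ i < N, B'.blue.Adj (x i) (y i)) ∨ ∀ i < N, B'.red.Adj (x i) (y i))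
      N B := by
  induction N with
  | zero => exact .win (.inr fun i hi => absurd hi i.not_lt_zero)
  | succ N ih =>
    refine (ih fun i hi => hxy i (by omega)).bind fun B₁ _ h => ?_
    rcases h with ⟨i, hi, hblue⟩ | hred
    · exact .win (.inl ⟨i, by omega, hblue⟩)
    · refine (forces_edge (hxy N N.lt_succ_self)).imp fun B₂ hB h => ?_
      rcases h with hN | hN
      · refine .inr fun i hi => ?_
        rcases Nat.lt_succ_iff_lt_or_eq.1 hi with hi | rfl
        exacts [Board.red_mono hB (hred i hi), hN]
      · exact .inl ⟨N, N.lt_succ_self, hN⟩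

end Asking

section Walks

variable {V : Type} {G G' : SimpleGraph V} {l l' : List V} {u v x y : V}

/-- `Traversal G l u v`: the list `l` is the sequence of vertices of a walk in `G` from `u` to
`v`. The walk is a path exactly when `l` has no duplicates. -/
def Traversal (G : SimpleGraph V) (l : List V) (u v : V) : Prop :=
  ∃ w : G.Walk u v, w.support = l

theorem Traversal.singleton (G : SimpleGraph V) (v : V) : Traversal G [v] v v := ⟨.nil, rfl⟩

theorem Traversal.mono (h : Traversal G l u v) (hG : G ≤ G') : Traversal G' l u v := by
  obtain ⟨w, rfl⟩ := h
  exact ⟨w.mapLe hG, w.support_mapLe_eq_support hG⟩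

theorem Traversal.reverse (h : Traversal G l u v) : Traversal G l.reverse v u := by
  obtain ⟨w, rfl⟩ := h
  exact ⟨w.reverse, w.support_reverse⟩

theorem Traversal.cons (huv : G.Adj u v) (h : Traversal G l v x) : Traversal G (u :: l) u x := by
  obtain ⟨w, rfl⟩ := h
  exact ⟨.cons huv w, rfl⟩

theorem Traversal.append (h : Traversal G l u v) (hvx : G.Adj v x) (h' : Traversal G l' x y) :
    Traversal G (l ++ l') u y := by
  obtain ⟨w, rfl⟩ := h
  obtain ⟨w', rfl⟩ := h'
  exact ⟨w.append (.cons hvx w'), by rw [Walk.support_append, Walk.support_cons, List.tail_cons]⟩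

theorem Traversal.of_isChain (hl : l ≠ []) (h : l.IsChain G.Adj) :
    Traversal G l (l.head hl) (l.getLast hl) :=
  ⟨.ofSupport l hl h, Walk.support_ofSupport hl h⟩

theorem Traversal.first_mem (h : Traversal G l u v) : u ∈ l := by
  obtain ⟨w, rfl⟩ := h
  exact w.start_mem_support

theorem Traversal.last_mem (h : Traversal G l u v) : v ∈ l := by
  obtain ⟨w, rfl⟩ := h
  exact w.end_mem_support

theorem Traversal.isChain (h : Traversal G l u v) : l.IsChain G.Adj := by
  obtain ⟨w, rfl⟩ := h
  exact w.isChain_adj_support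

theorem Traversal.hasCopy_pathGraph (h : Traversal G l u v) (hl : l.Nodup) {N : ℕ}
    (hN : N ≤ l.length) : HasCopy (pathGraph N) G := by
  have hadj := List.isChain_iff_getElem.1 h.isChain
  refine ⟨⟨fun i => l[i.1], fun i j hij => Fin.ext ((hl.getElem_inj_iff).1 hij)⟩, ?_⟩
  rintro ⟨i, hi⟩ ⟨j, hj⟩ hij
  rcases pathGraph_adj.1 hij with h | h <;> simp only at h <;> subst h
  exacts [hadj i (by omega), (hadj j (by omega)).symm]

theorem Traversal.hasCopy_cycleGraph (h : Traversal G l u v) (hl : l.Nodup) (hlen : 2 < l.length)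
    (hvu : G.Adj v u) : HasCopy (cycleGraph l.length) G := by
  obtain ⟨w, rfl⟩ := h
  have hw : w.IsPath := w.isPath_def.2 hl
  rw [w.length_support] at hlen ⊢
  have hcycle : (Walk.cons hvu w).IsCycle := by
    refine (w.cons_isCycle_iff hvu).2 ⟨hw, fun hedge => ?_⟩
    have := hw.length_eq_one_of_mem_edges (Sym2.eq_swap ▸ hedge)
    omega
  obtain ⟨f⟩ := (cycleGraph_isContained_iff hlen).2 ⟨v, _, hcycle, rfl⟩
  exact ⟨f.toEmbedding, fun _ _ hxy => f.toHom.map_adj hxy⟩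

/-- `IsPathSeq G N p`: the first `N` terms of the sequence `p` are the vertices, in order, of a path
in `G`. Later terms are irrelevant. -/
structure IsPathSeq (G : SimpleGraph V) (N : ℕ) (p : ℕ → V) : Prop where
  injOn : Set.InjOn p (Set.Iio N)
  adj : ∀ i, i + 1 < N → G.Adj (p i) (p (i + 1))

namespace IsPathSeq

variable {N M a b : ℕ} {p : ℕ → V}

theorem mono (h : IsPathSeq G N p) (hG : G ≤ G') : IsPathSeq G' N p :=
  ⟨h.injOn, fun i hi => hG (h.adj i hi)⟩

theorem shift (h : IsPathSeq G N p) (haM : a + M ≤ N) : IsPathSeq G M fun i => p (a + i) where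
  injOn i hi j hj hij := by
    simp only [Set.mem_Iio] at hi hj
    have := h.injOn (Set.mem_Iio.2 (by omega)) (Set.mem_Iio.2 (by omega)) hij
    omega
  adj i hi := h.adj (a + i) (by omega)

theorem ne (h : IsPathSeq G N p) (ha : a < N) (hb : b < N) (hab : a ≠ b) : p a ≠ p b :=
  fun hp => hab (h.injOn ha hb hp)

theorem traversal (h : IsPathSeq G N p) (hab : a ≤ b) (hb : b < N) :
    Traversal G ((List.Ico a (b + 1)).map p) (p a) (p b) := by
  induction b, hab using Nat.le_induction with
  | base => simpa using Traversal.singleton G (p a)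
  | succ b hab ih =>
    rw [List.Ico.succ_top (by omega), List.map_append]
    exact (ih (by omega)).append (h.adj b hb) (Traversal.singleton G (p (b + 1)))

theorem hasCopy_cycleGraph_of_traversal_map (h : IsPathSeq G N p) {l : List ℕ} {n : ℕ}
    (hwalk : Traversal G (l.map p) u v) (hl : l.Nodup) (hlN : ∀ i ∈ l, i < N)
    (hlen : l.length = n) (hn : 2 < n) (hvu : G.Adj v u) : HasCopy (cycleGraph n) G := by
  subst hlen
  have hnodup : (l.map p).Nodup :=
    (List.nodup_map_iff_inj_on hl).2 fun _ hi _ hj hij => h.injOn (hlN _ hi) (hlN _ hj) hij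
  rw [← List.length_map (f := p)] at hn ⊢
  exact hwalk.hasCopy_cycleGraph hnodup hn hvu

theorem hasCopy_cycleGraph (h : IsPathSeq G N p) (hN : 2 < N) (hclose : G.Adj (p (N - 1)) (p 0)) :
    HasCopy (cycleGraph N) G := by
  refine h.hasCopy_cycleGraph_of_traversal_map (h.traversal (Nat.zero_le (N - 1)) (by omega))
    (List.Ico.nodup _ _) (fun i hi => ?_) ?_ hN hclose
  · rw [List.Ico.mem] at hi
    omega
  · rw [List.Ico.length]
    omega

end IsPathSeq

theorem exists_isPathSeq_of_hasCopy [Nonempty V] {N : ℕ} (h : HasCopy (pathGraph N) G) :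
    ∃ p, IsPathSeq G N p := by
  obtain ⟨f, hf⟩ := h
  let p : ℕ → V := fun i => if hi : i < N then f ⟨i, hi⟩ else Classical.arbitrary V
  have hp : ∀ i (hi : i < N), p i = f ⟨i, hi⟩ := fun i hi => dif_pos hi
  refine ⟨p, fun i hi j hj hij => ?_, fun i hi => ?_⟩
  · rw [hp i hi, hp j hj] at hij
    exact congrArg Fin.val (f.injective hij)
  · rw [hp i (by omega), hp (i + 1) hi]
    exact hf _ _ (pathGraph_adj.2 (.inl rfl))

/-- The sequence `x 0, y 0, x 1, y 1, …`. -/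
def interleave (x y : ℕ → V) (t : ℕ) : V := if Even t then x (t / 2) else y (t / 2)

section Interleave

variable {x y : ℕ → V} {m : ℕ}

theorem interleave_two_mul (i : ℕ) : interleave x y (2 * i) = x i := by
  simp [interleave]

theorem interleave_two_mul_add_one (i : ℕ) : interleave x y (2 * i + 1) = y i := by
  rw [interleave, if_neg (by simp), Nat.mul_add_div two_pos, Nat.div_eq_of_lt one_lt_two,
    Nat.add_zero]

theorem injOn_interleave (hx : Set.InjOn x (Set.Iio m)) (hy : Set.InjOn y (Set.Iio m))
    (hxy : ∀ i < m, ∀ j < m, x i ≠ y j) : Set.InjOn (interleave x y) (Set.Iio (2 * m)) := by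
  intro s hs t ht hst
  simp only [Set.mem_Iio] at hs ht
  rcases Nat.even_or_odd' s with ⟨i, rfl | rfl⟩ <;>
    rcases Nat.even_or_odd' t with ⟨j, rfl | rfl⟩ <;>
    simp only [interleave_two_mul, interleave_two_mul_add_one] at hst
  · rw [hx (Set.mem_Iio.2 (by omega)) (Set.mem_Iio.2 (by omega)) hst]
  · exact absurd hst (hxy i (by omega) j (by omega))
  · exact absurd hst.symm (hxy j (by omega) i (by omega))
  · rw [hy (Set.mem_Iio.2 (by omega)) (Set.mem_Iio.2 (by omega)) hst]

theorem isPathSeq_interleave (hx : Set.InjOn x (Set.Iio m)) (hy : Set.InjOn y (Set.Iio m))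
    (hxy : ∀ i < m, ∀ j < m, x i ≠ y j) (hadj : ∀ i < m, G.Adj (x i) (y i))
    (hadj' : ∀ i, i + 1 < m → G.Adj (y i) (x (i + 1))) :
    IsPathSeq G (2 * m) (interleave x y) := by
  refine ⟨injOn_interleave hx hy hxy, fun t ht => ?_⟩
  rcases Nat.even_or_odd' t with ⟨i, rfl | rfl⟩
  · rw [interleave_two_mul, interleave_two_mul_add_one]
    exact hadj i (by omega)
  · rw [show 2 * i + 1 + 1 = 2 * (i + 1) by ring, interleave_two_mul, interleave_two_mul_add_one]
    exact hadj' i (by omega)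

end Interleave

end Walks

section BlueCycle

variable {V : Type} {G : SimpleGraph V} {n a : ℕ} {c : ℕ → V}

theorem IsPathSeq.hasCopy_cycleGraph_of_chord {d : ℕ} (h : IsPathSeq G (n + d) c)
    (hclose : G.Adj (c (n + d - 1)) (c 0)) (hn : 2 < n) (ha : a + 1 < n)
    (hchord : G.Adj (c a) (c (a + d + 1))) : HasCopy (cycleGraph n) G := by
  have hwalk := (h.traversal (a := a + d + 1) (b := n + d - 1) (by omega) (by omega)).append hclose
    (h.traversal (Nat.zero_le a) (by omega))
  rw [← List.map_append] at hwalk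
  refine h.hasCopy_cycleGraph_of_traversal_map hwalk ?_ ?_ ?_ hn hchord
  · refine (List.Ico.nodup _ _).append (List.Ico.nodup _ _) fun i hi hj => ?_
    rw [List.Ico.mem] at hi hj
    omega
  · simp only [List.mem_append, List.Ico.mem]
    omega
  · simp only [List.length_append, List.Ico.length]
    omega

-- The cycle runs `0, a, a - 1, …, 2, a + 2, a + 3, …, n + 1` and misses `1` and `a + 1`.
theorem IsPathSeq.hasCopy_cycleGraph_of_crossing_chords (h : IsPathSeq G (n + 2) c)
    (hclose : G.Adj (c (n + 1)) (c 0)) (hn : 2 < n) (ha : 2 ≤ a) (han : a < n)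
    (hchord : G.Adj (c 0) (c a)) (hchord' : G.Adj (c 2) (c (a + 2))) :
    HasCopy (cycleGraph n) G := by
  have hwalk := ((h.traversal ha (by omega)).reverse.append hchord'
    (h.traversal (b := n + 1) (by omega) (by omega))).cons hchord
  rw [← List.map_reverse, ← List.map_append, ← List.map_cons] at hwalk
  refine h.hasCopy_cycleGraph_of_traversal_map hwalk ?_ ?_ ?_ hn hclose
  · refine List.nodup_cons.2 ⟨?_, (List.nodup_reverse.2 (List.Ico.nodup _ _)).append
      (List.Ico.nodup _ _) fun i hi hj => ?_⟩
    · simp only [List.mem_append, List.mem_reverse, List.Ico.mem]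
      omega
    · rw [List.mem_reverse, List.Ico.mem] at hi
      rw [List.Ico.mem] at hj
      omega
  · simp only [List.mem_cons, List.mem_append, List.mem_reverse, List.Ico.mem]
    omega
  · simp only [List.length_cons, List.length_append, List.length_reverse, List.Ico.length]
    omega

end BlueCycle

section FromBlueCycle

variable {B : Board} {k n N : ℕ} {c : ℕ → ℕ}

theorem forces_red_cycle_or_blue_edge (hN : 2 < N) (hc : Set.InjOn c (Set.Iio N)) :
    Forces (fun B' => RedCopy (cycleGraph N) B' ∨ (∃ i, i + 1 < N ∧ B'.blue.Adj (c i) (c (i + 1))) ∨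
      B'.blue.Adj (c (N - 1)) (c 0)) N B := by
  obtain ⟨N, rfl⟩ : ∃ M, N = M + 1 := ⟨N - 1, by omega⟩
  have hne : ∀ i ≤ N, ∀ j ≤ N, i ≠ j → c i ≠ c j := fun i hi j hj hij heq =>
    hij (hc (Nat.lt_succ_of_le hi) (Nat.lt_succ_of_le hj) heq)
  refine (forces_blue_or_all_red (x := c) (y := fun i => c (i + 1)) (N := N)
    fun i hi => hne i hi.le (i + 1) hi (by omega)).bind fun B₁ _ h => ?_
  rcases h with ⟨i, hi, hblue⟩ | hred
  · exact .win (.inr (.inl ⟨i, by omega, hblue⟩))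
  refine (forces_edge (hne N le_rfl 0 N.zero_le (by omega))).imp fun B₂ hB h => ?_
  refine h.imp (fun hclose => ?_) .inr
  have hpath : IsPathSeq B₂.red (N + 1) c :=
    ⟨hc, fun i hi => Board.red_mono hB (hred i (by omega))⟩
  exact hpath.hasCopy_cycleGraph hN hclose

theorem forces_long_chord (hk : 2 < k) (h : IsPathSeq B.blue (n + 2) c)
    (hclose : B.blue.Adj (c (n + 1)) (c 0)) {a : ℕ} (hn : a + 3 * k ≤ n + 4) :
    Forces (fun B' => WinCC k n B' ∨ B'.blue.Adj (c a) (c (a + 3 * (k - 1)))) k B := by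
  have hinj : Set.InjOn (fun i => c (a + 3 * i)) (Set.Iio k) := by
    intro i hi j hj hij
    simp only [Set.mem_Iio] at hi hj
    have := h.injOn (Set.mem_Iio.2 (by omega)) (Set.mem_Iio.2 (by omega)) hij
    omega
  refine (forces_red_cycle_or_blue_edge hk hinj).imp fun B' hB hB' => ?_
  rcases hB' with hred | ⟨i, hi, hblue⟩ | hblue
  · exact .inl (.inl hred)
  · exact .inl (.inr ((h.mono (Board.blue_mono hB)).hasCopy_cycleGraph_of_chord
      (Board.blue_mono hB hclose) (by omega) (by omega) hblue))
  · exact .inr hblue.symm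

theorem forces_of_blue_cycle_add_two (hk : 2 < k) (hn : 3 * k ≤ n + 2)
    (h : IsPathSeq B.blue (n + 2) c) (hclose : B.blue.Adj (c (n + 1)) (c 0)) :
    Forces (WinCC k n) (2 * k) B := by
  rw [two_mul]
  refine (forces_long_chord hk h hclose (a := 0) (by omega)).bind fun B₁ h₁ hB₁ => ?_
  rcases hB₁ with hwin | hchord
  · exact .win hwin
  have hblue₁ := Board.blue_mono h₁
  refine (forces_long_chord hk (h.mono hblue₁) (hblue₁ hclose) (a := 2) (by omega)).imp
    fun B₂ h₂ hB₂ => ?_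
  rcases hB₂ with hwin | hchord'
  · exact hwin
  have hblue₂ := Board.blue_mono h₂
  rw [zero_add] at hchord
  rw [add_comm 2] at hchord'
  exact .inr ((h.mono (hblue₁.trans hblue₂)).hasCopy_cycleGraph_of_crossing_chords
    (hblue₂ (hblue₁ hclose)) (by omega) (by omega) (by omega) (hblue₂ hchord) hchord')

end FromBlueCycle

section CrossLadder

variable {V : Type} {G G' : SimpleGraph V} {M m a : ℕ} {x y : ℕ → V}

/-- Two disjoint sequences of `M` distinct vertices each in which consecutive terms of the two
sequences, rather than terms of equal index, are adjacent. Builder obtains such a red graph between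
the two ends of a long blue path. -/
structure IsCrossLadder (G : SimpleGraph V) (M : ℕ) (x y : ℕ → V) : Prop where
  injOn_left : Set.InjOn x (Set.Iio M)
  injOn_right : Set.InjOn y (Set.Iio M)
  ne : ∀ i < M, ∀ j < M, x i ≠ y j
  adj : ∀ i, i + 1 < M → G.Adj (x i) (y (i + 1))
  adj' : ∀ i, i + 1 < M → G.Adj (y i) (x (i + 1))

namespace IsCrossLadder

theorem mono (h : IsCrossLadder G M x y) (hG : G ≤ G') : IsCrossLadder G' M x y :=
  { h with
    adj := fun i hi => hG (h.adj i hi)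
    adj' := fun i hi => hG (h.adj' i hi) }

theorem symm (h : IsCrossLadder G M x y) : IsCrossLadder G M y x :=
  ⟨h.injOn_right, h.injOn_left, fun i hi j hj => (h.ne j hj i hi).symm, h.adj', h.adj⟩

theorem shift (h : IsCrossLadder G (a + M) x y) :
    IsCrossLadder G M (fun i => x (a + i)) fun i => y (a + i) where
  injOn_left _ hi _ hj hij := Nat.add_left_cancel
    (h.injOn_left (Nat.add_lt_add_left hi a) (Nat.add_lt_add_left hj a) hij)
  injOn_right _ hi _ hj hij := Nat.add_left_cancel
    (h.injOn_right (Nat.add_lt_add_left hi a) (Nat.add_lt_add_left hj a) hij)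
  ne _ hi _ hj := h.ne _ (Nat.add_lt_add_left hi a) _ (Nat.add_lt_add_left hj a)
  adj i hi := h.adj (a + i) (Nat.add_lt_add_left hi a)
  adj' i hi := h.adj' (a + i) (Nat.add_lt_add_left hi a)

-- The cycle is `x 0, y 1, x 2, …, y (2 * m - 1)`.
theorem hasCopy_cycleGraph (h : IsCrossLadder G M x y) (hm : 2 ≤ m) (hM : 2 * m ≤ M)
    (hclose : G.Adj (y (2 * m - 1)) (x 0)) : HasCopy (cycleGraph (2 * m)) G := by
  have hpath : IsPathSeq G (2 * m) (interleave (fun i => x (2 * i)) fun i => y (2 * i + 1)) := by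
    refine isPathSeq_interleave (fun i hi j hj hij => ?_) (fun i hi j hj hij => ?_)
      (fun i hi j hj => h.ne _ (by omega) _ (by omega)) (fun i hi => h.adj _ (by omega))
      fun i hi => h.adj' _ (by omega)
    all_goals rw [Set.mem_Iio] at hi hj
    · have := h.injOn_left (Set.mem_Iio.2 (by omega)) (Set.mem_Iio.2 (by omega)) hij
      omega
    · have := h.injOn_right (Set.mem_Iio.2 (by omega)) (Set.mem_Iio.2 (by omega)) hij
      omega
  refine hpath.hasCopy_cycleGraph (by omega) ?_
  have hlast : 2 * m - 1 = 2 * (m - 1) + 1 := by omega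
  rw [hlast] at hclose ⊢
  rwa [interleave_two_mul_add_one, ← Nat.mul_zero 2, interleave_two_mul]

end IsCrossLadder

end CrossLadder

section FromBluePath

variable {B : Board} {m n M : ℕ} {x y p : ℕ → ℕ}

theorem IsCrossLadder.forces_closing_edge (h : IsCrossLadder B.red M x y) (hm : 2 ≤ m)
    (hM : 2 * m ≤ M) :
    Forces (fun B' => RedCopy (cycleGraph (2 * m)) B' ∨ B'.blue.Adj (y (2 * m - 1)) (x 0)) 1 B :=
  (forces_edge (h.ne 0 (by omega) (2 * m - 1) (by omega)).symm).imp fun _ hB h' =>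
    h'.imp_left fun hred => (h.mono (Board.red_mono hB)).hasCopy_cycleGraph hm hM hred

-- The cycle runs `0, …, 2m - 1, n, n - 1, …, 3m, n + m + 1, …, n + 2m - 1`.
theorem IsPathSeq.hasCopy_cycleGraph_of_three_chords {V : Type} {G : SimpleGraph V} {p : ℕ → V}
    (h : IsPathSeq G (n + 3 * m + 1) p) (hm : 2 ≤ m) (hn : 6 * m ≤ n)
    (h₁ : G.Adj (p (n + (2 * m - 1))) (p 0)) (h₂ : G.Adj (p (2 * m - 1)) (p n))
    (h₃ : G.Adj (p (3 * m)) (p (n + (m + 1)))) : HasCopy (cycleGraph n) G := by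
  have hwalk := (h.traversal (Nat.zero_le (2 * m - 1)) (by omega)).append h₂
    ((h.traversal (b := n) (by omega) (by omega)).reverse.append h₃
      (h.traversal (b := n + (2 * m - 1)) (by omega) (by omega)))
  rw [← List.map_reverse, ← List.map_append, ← List.map_append] at hwalk
  refine h.hasCopy_cycleGraph_of_traversal_map hwalk ?_ ?_ ?_ (by omega) h₁
  · simp only [List.nodup_append', List.nodup_reverse, List.Ico.nodup, true_and,
      List.disjoint_left, List.mem_append, List.mem_reverse, List.Ico.mem]
    constructor <;> intro i hi <;> omega
  · simp only [List.mem_append, List.mem_reverse, List.Ico.mem]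
    omega
  · simp only [List.length_append, List.length_reverse, List.Ico.length]
    omega

theorem forces_of_red_crossLadder (hm : 2 ≤ m) (hn : 6 * m ≤ n)
    (hp : IsPathSeq B.blue (n + 3 * m + 1) p)
    (h : IsCrossLadder B.red (3 * m + 1) p fun i => p (n + i)) :
    Forces (WinCC (2 * m) n) (1 + (1 + 1)) B := by
  refine (h.forces_closing_edge hm (by omega)).bind fun B₁ hB₁ h₁ => ?_
  rcases h₁ with hred | hblue₁
  · exact .win (.inl hred)
  have h' := h.mono (Board.red_mono hB₁)
  refine (h'.symm.forces_closing_edge hm (by omega)).bind fun B₂ hB₂ h₂ => ?_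
  rcases h₂ with hred | hblue₂
  · exact .win (.inl hred)
  have h'' : IsCrossLadder B₂.red ((m + 1) + 2 * m) p fun i => p (n + i) := by
    convert h'.mono (Board.red_mono hB₂) using 1
    omega
  refine (h''.shift.symm.forces_closing_edge hm le_rfl).imp fun B₃ hB₃ h₃ => ?_
  rcases h₃ with hred | hblue₃
  · exact .inl hred
  have h13 := Board.blue_mono (hB₂.trans hB₃)
  have hlast : m + 1 + (2 * m - 1) = 3 * m := by omega
  rw [hlast] at hblue₃
  exact .inr ((hp.mono ((Board.blue_mono hB₁).trans h13)).hasCopy_cycleGraph_of_three_chords hm hn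
    (h13 hblue₁) (Board.blue_mono hB₃ hblue₂) hblue₃)

theorem forces_of_blue_path (hm : 2 ≤ m) (hn : 6 * m ≤ n)
    (h : IsPathSeq B.blue (n + 3 * m + 1) p) : Forces (WinCC (2 * m) n) (10 * m) B := by
  have hrounds : 10 * m = 3 * m + (3 * m + 4 * m) := by ring
  rw [hrounds]
  refine (forces_blue_or_all_red (x := fun i => p (n + i)) (y := fun i => p (i + 1)) (N := 3 * m)
    fun i hi => h.ne (by omega) (by omega) (by omega)).bind fun B₁ hB₁ hshort => ?_
  replace h := h.mono (Board.blue_mono hB₁)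
  rcases hshort with ⟨i, hi, hblue⟩ | hshort
  · refine .win (.inr ((h.shift (a := i + 1) (M := n) (by omega)).hasCopy_cycleGraph (by omega) ?_))
    convert hblue using 2
    omega
  refine (forces_blue_or_all_red (x := p) (y := fun i => p (n + (i + 1))) (N := 3 * m)
    fun i hi => h.ne (by omega) (by omega) (by omega)).bind fun B₂ hB₂ hlong => ?_
  replace h := h.mono (Board.blue_mono hB₂)
  rcases hlong with ⟨i, hi, hblue⟩ | hlong
  · refine (forces_of_blue_cycle_add_two (by omega) (by omega)
      (h.shift (a := i) (M := n + 2) (by omega)) ?_).mono (by omega : 2 * (2 * m) ≤ 4 * m)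
    simpa only [Nat.add_zero, Nat.add_left_comm i n 1] using hblue.symm
  · have hladder : IsCrossLadder B₂.red (3 * m + 1) p fun i => p (n + i) :=
      { injOn_left := h.injOn.mono (Set.Iio_subset_Iio (by omega))
        injOn_right := (h.shift (a := n) (M := 3 * m + 1) le_rfl).injOn
        ne := fun i hi j hj => h.ne (by omega) (by omega) (by omega)
        adj := fun i hi => hlong i (by omega)
        adj' := fun i hi => Board.red_mono hB₂ (hshort i (by omega)) }
    exact (forces_of_red_crossLadder hm hn h hladder).mono (by omega)

end FromBluePath

section Strands

/-- Data for a path: its ends and the list of its vertices. The three fields are tied together by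
`Traversal` whenever a strand is placed in a graph. -/
structure Strand (V : Type) where
  first : V
  last : V
  support : List V

namespace Strand

variable {V : Type}

/-- The path with the single vertex `v`. -/
def singleton (v : V) : Strand V := ⟨v, v, [v]⟩

/-- The path traversed backwards. -/
def reverse (P : Strand V) : Strand V := ⟨P.last, P.first, P.support.reverse⟩

/-- The path `P` followed by `Q`, to be used when `P.last` and `Q.first` are adjacent. -/
def append (P Q : Strand V) : Strand V := ⟨P.first, Q.last, P.support ++ Q.support⟩

/-- The path that runs backwards through `P`, then through `z`, then through `Q`. -/
def joinAt (z : V) (P Q : Strand V) : Strand V := P.reverse.append ((singleton z).append Q)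

theorem support_joinAt_perm (z : V) (P Q : Strand V) :
    (joinAt z P Q).support.Perm (z :: (P.support ++ Q.support)) :=
  ((List.reverse_perm P.support).append_right _).trans List.perm_middle

end Strand

/-- Vertex-disjoint paths of `G`. -/
structure IsForest {V : Type} (G : SimpleGraph V) (L : List (Strand V)) : Prop where
  traversal : ∀ P ∈ L, Traversal G P.support P.first P.last
  nodup : (L.flatMap Strand.support).Nodup

namespace IsForest

variable {V : Type} {G G' : SimpleGraph V} {L L' : List (Strand V)} {P Q : Strand V} {z : V}

theorem mono (h : IsForest G L) (hG : G ≤ G') : IsForest G' L :=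
  ⟨fun P hP => (h.traversal P hP).mono hG, h.nodup⟩

theorem perm (h : IsForest G L) (hL : L.Perm L') : IsForest G L' :=
  ⟨fun P hP => h.traversal P (hL.mem_iff.2 hP), (hL.flatMap_right _).nodup_iff.1 h.nodup⟩

theorem sublist (h : IsForest G L) (hL : L'.Sublist L) : IsForest G L' :=
  ⟨fun P hP => h.traversal P (hL.subset hP), h.nodup.sublist (hL.flatMap _)⟩

theorem joinAt (h : IsForest G (P :: Q :: L)) (hz : z ∉ (P :: Q :: L).flatMap Strand.support)
    (hP : G.Adj P.first z) (hQ : G.Adj Q.first z) : IsForest G (Strand.joinAt z P Q :: L) := by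
  obtain ⟨hPw, hQw, hLw⟩ : _ ∧ _ ∧ _ := by simpa only [List.forall_mem_cons] using h.traversal
  refine ⟨List.forall_mem_cons.2 ⟨hPw.reverse.append hP (hQw.cons hQ.symm), hLw⟩, ?_⟩
  refine ((Strand.support_joinAt_perm z P Q).append_right _).nodup_iff.2 ?_
  rw [List.cons_append, List.append_assoc]
  exact h.nodup.cons hz

end IsForest

end Strands

section TwoStrands

variable {B : Board} {m N : ℕ}

theorem Traversal.exists_isPathSeq {V : Type} {G : SimpleGraph V} {l : List V} {u v : V}
    (h : Traversal G l u v) (hl : l.Nodup) :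
    ∃ x, IsPathSeq G l.length x ∧ ∀ i < l.length, Traversal G (l.drop i) (x i) v := by
  obtain ⟨w, rfl⟩ := h
  rw [w.length_support]
  refine ⟨w.getVert, ⟨fun i hi j hj hij => ?_, fun i hi => w.adj_getVert_succ (by omega)⟩,
    fun i hi => ⟨w.drop i, ?_⟩⟩
  · exact (w.isPath_def.2 hl).getVert_injOn (Nat.le_of_lt_succ hi) (Nat.le_of_lt_succ hj) hij
  · rw [Walk.drop_support_eq_support_drop_min, min_eq_left (Nat.le_of_lt_succ hi)]

theorem forces_red_cycle_or_blue_between (hm : 2 ≤ m) {x y : ℕ → ℕ}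
    (hx : Set.InjOn x (Set.Iio m)) (hy : Set.InjOn y (Set.Iio m))
    (hxy : ∀ i < m, ∀ j < m, x i ≠ y j) :
    Forces (fun B' => RedCopy (cycleGraph (2 * m)) B' ∨
      ∃ i < m, ∃ j < m, B'.blue.Adj (x i) (y j)) (2 * m) B := by
  refine (forces_red_cycle_or_blue_edge (by omega) (injOn_interleave hx hy hxy)).imp
    fun B' _ h => h.imp_right ?_
  rintro (⟨t, ht, hblue⟩ | hblue)
  · rcases Nat.even_or_odd' t with ⟨i, rfl | rfl⟩
    · rw [interleave_two_mul, interleave_two_mul_add_one] at hblue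
      exact ⟨i, by omega, i, by omega, hblue⟩
    · have hsucc : 2 * i + 1 + 1 = 2 * (i + 1) := by ring
      rw [hsucc, interleave_two_mul, interleave_two_mul_add_one] at hblue
      exact ⟨i + 1, by omega, i, by omega, hblue.symm⟩
  · have hlast : 2 * m - 1 = 2 * (m - 1) + 1 := by omega
    rw [hlast, interleave_two_mul_add_one, ← Nat.mul_zero 2, interleave_two_mul] at hblue
    exact ⟨0, by omega, m - 1, by omega, hblue.symm⟩

theorem forces_of_two_strands (hm : 2 ≤ m) {P Q : Strand ℕ} (h : IsForest B.blue [P, Q])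
    (hlen : N + 2 * m ≤ P.support.length + Q.support.length + 2) :
    Forces (WinCP (2 * m) N) (2 * m) B := by
  have hP := h.traversal P (by simp)
  have hQ := h.traversal Q (by simp)
  obtain ⟨hPnodup, hQnodup, hdisj⟩ := List.nodup_append'.1
    (show (P.support ++ Q.support).Nodup by simpa using h.nodup)
  rcases Nat.lt_or_ge P.support.length m with hPm | hPm
  · exact .win (.inr (hQ.hasCopy_pathGraph hQnodup (by omega)))
  rcases Nat.lt_or_ge Q.support.length m with hQm | hQm
  · exact .win (.inr (hP.hasCopy_pathGraph hPnodup (by omega)))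
  obtain ⟨x, hx, hxwalk⟩ := hP.exists_isPathSeq hPnodup
  obtain ⟨y, hy, hywalk⟩ := hQ.exists_isPathSeq hQnodup
  have hxy : ∀ i < m, ∀ j < m, x i ≠ y j := fun i hi j hj heq =>
    hdisj (List.mem_of_mem_drop (hxwalk i (by omega)).first_mem)
      (heq ▸ List.mem_of_mem_drop (hywalk j (by omega)).first_mem)
  refine (forces_red_cycle_or_blue_between hm (hx.injOn.mono (Set.Iio_subset_Iio hPm))
    (hy.injOn.mono (Set.Iio_subset_Iio hQm)) hxy).imp fun B' hB hB' => hB'.imp_right ?_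
  rintro ⟨i, hi, j, hj, hblue⟩
  have hwalk := ((hxwalk i (by omega)).mono (Board.blue_mono hB)).reverse.append hblue
    ((hywalk j (by omega)).mono (Board.blue_mono hB))
  refine hwalk.hasCopy_pathGraph ?_ ?_
  · refine (List.nodup_reverse.2 (hPnodup.sublist (List.drop_sublist _ _))).append
      (hQnodup.sublist (List.drop_sublist _ _)) fun v hv hv' => ?_
    exact hdisj (List.mem_of_mem_drop (List.mem_reverse.1 hv)) (List.mem_of_mem_drop hv')
  · simp only [List.length_append, List.length_reverse, List.length_drop]
    omega

theorem forces_of_length_le_two (hm : 2 ≤ m) {L : List (Strand ℕ)} (h : IsForest B.blue L)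
    (hL : L.length ≤ 2) (hlen : N + 2 * m ≤ (L.flatMap Strand.support).length + 2) :
    Forces (WinCP (2 * m) N) (2 * m) B := by
  match L, hL with
  | [], _ =>
    rw [List.flatMap_nil, List.length_nil] at hlen
    omega
  | [P], _ =>
    have hnodup := h.nodup
    rw [List.flatMap_singleton] at hnodup hlen
    exact .win (.inr ((h.traversal P (by simp)).hasCopy_pathGraph hnodup (by omega)))
  | [P, Q], _ =>
    exact forces_of_two_strands hm h (by simpa using hlen)

end TwoStrands

section Merging

/-- `IsConnector G A k c`: the ends `c.1` and `c.2` are joined by a path of `G` with all vertices in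
`A` that a further vertex adjacent to both ends closes up to a cycle of length `k`. -/
def IsConnector {V : Type} (G : SimpleGraph V) (A : List V) (k : ℕ) (c : V × V) : Prop :=
  ∃ l, Traversal G l c.1 c.2 ∧ l.Nodup ∧ l.length + 1 = k ∧ l ⊆ A

namespace IsConnector

variable {V : Type} {G G' : SimpleGraph V} {A : List V} {k : ℕ} {c : V × V}

theorem mono (h : IsConnector G A k c) (hG : G ≤ G') : IsConnector G' A k c := by
  obtain ⟨l, hl, hrest⟩ := h
  exact ⟨l, hl.mono hG, hrest⟩

theorem fst_mem (h : IsConnector G A k c) : c.1 ∈ A := by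
  obtain ⟨l, hl, _, _, hlA⟩ := h
  exact hlA hl.first_mem

theorem snd_mem (h : IsConnector G A k c) : c.2 ∈ A := by
  obtain ⟨l, hl, _, _, hlA⟩ := h
  exact hlA hl.last_mem

theorem hasCopy_cycleGraph (h : IsConnector G A k c) (hk : 2 < k) {x : V} (hx : x ∉ A)
    (h₁ : G.Adj x c.1) (h₂ : G.Adj x c.2) : HasCopy (cycleGraph k) G := by
  obtain ⟨l, hl, hnodup, rfl, hlA⟩ := h
  exact (hl.cons h₁).hasCopy_cycleGraph (hnodup.cons fun hxl => hx (hlA hxl)) hk h₂.symm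

end IsConnector

theorem exists_perm_of_forall_or {α : Type*} {p q : α → Prop} {a b c : α} (ha : p a ∨ q a)
    (hb : p b ∨ q b) (hc : p c ∨ q c) :
    ∃ x y z, [a, b, c].Perm [x, y, z] ∧ ((p x ∧ p y) ∨ (q x ∧ q y)) := by
  have hacb : [a, b, c].Perm [a, c, b] := (List.Perm.swap c b []).cons a
  have hbca : [a, b, c].Perm [b, c, a] :=
    (List.Perm.swap b a [c]).trans ((List.Perm.swap c a []).cons b)
  by_cases hab : (p a ∧ p b) ∨ (q a ∧ q b)
  · exact ⟨a, b, c, .refl _, hab⟩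
  by_cases hac : (p a ∧ p c) ∨ (q a ∧ q c)
  · exact ⟨a, c, b, hacb, hac⟩
  · exact ⟨b, c, a, hbca, by tauto⟩

variable {B B' : Board} {A : List ℕ} {k : ℕ} {c : ℕ × ℕ} {C : List (ℕ × ℕ)}
  {L L' : List (Strand ℕ)} {P Q R : Strand ℕ}

theorem forces_two_of_three {z : ℕ} (hP : P.first ≠ z) (hQ : Q.first ≠ z) (hR : R.first ≠ z) :
    Forces (fun B' => ∃ P' Q' R', [P, Q, R].Perm [P', Q', R'] ∧
      ((B'.red.Adj P'.first z ∧ B'.red.Adj Q'.first z) ∨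
        (B'.blue.Adj P'.first z ∧ B'.blue.Adj Q'.first z))) 3 B := by
  refine (forces_edge hP).bind (t := 2) fun B₁ _ hP' => ?_
  refine (forces_edge hQ).bind (t := 1) fun B₂ h₂ hQ' => ?_
  refine (forces_edge hR).imp fun B₃ h₃ hR' => ?_
  have mono {B B' : Board} (hB : B ≤ B') {x : ℕ} (hx : B.red.Adj x z ∨ B.blue.Adj x z) :
      B'.red.Adj x z ∨ B'.blue.Adj x z :=
    hx.imp (fun h => Board.red_mono hB h) fun h => Board.blue_mono hB h
  exact exists_perm_of_forall_or (p := fun P : Strand ℕ => B₃.red.Adj P.first z)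
    (q := fun P : Strand ℕ => B₃.blue.Adj P.first z) (mono (h₂.trans h₃) hP') (mono h₃ hQ') hR'

theorem IsConnector.forces_blue_pair (hc : IsConnector B.red A k c) (hk : 2 < k)
    (hends : ∀ P' ∈ [P, Q, R], P'.first ∉ A) :
    Forces (fun B' => RedCopy (cycleGraph k) B' ∨ ∃ P' Q' R' z, [P, Q, R].Perm [P', Q', R'] ∧
      (z = c.1 ∨ z = c.2) ∧ B'.blue.Adj P'.first z ∧ B'.blue.Adj Q'.first z) 5 B := by
  have ne_of_mem (P' : Strand ℕ) (hP' : P' ∈ [P, Q, R]) {z : ℕ} (hz : z ∈ A) : P'.first ≠ z :=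
    fun h => hends P' hP' (h ▸ hz)
  refine (forces_two_of_three (z := c.1) (ne_of_mem P (by simp) hc.fst_mem)
    (ne_of_mem Q (by simp) hc.fst_mem) (ne_of_mem R (by simp) hc.fst_mem)).bind (t := 2)
      fun B₁ h₁ h => ?_
  obtain ⟨P', Q', R', hperm, ⟨hP₁, hQ₁⟩ | hblue⟩ := h
  swap
  · exact .win (.inr ⟨P', Q', R', c.1, hperm, .inl rfl, hblue⟩)
  have hPmem : P' ∈ [P, Q, R] := hperm.mem_iff.2 (by simp)
  have hQmem : Q' ∈ [P, Q, R] := hperm.mem_iff.2 (by simp)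
  refine (forces_edge (ne_of_mem P' hPmem hc.snd_mem)).bind (t := 1) fun B₂ h₂ hP₂ => ?_
  rcases hP₂ with hP₂ | hP₂
  · exact .win (.inl ((hc.mono (Board.red_mono (h₁.trans h₂))).hasCopy_cycleGraph hk
      (hends P' hPmem) (Board.red_mono h₂ hP₁) hP₂))
  refine (forces_edge (ne_of_mem Q' hQmem hc.snd_mem)).imp fun B₃ h₃ hQ₂ => ?_
  rcases hQ₂ with hQ₂ | hQ₂
  · exact .inl ((hc.mono (Board.red_mono (h₁.trans (h₂.trans h₃)))).hasCopy_cycleGraph hk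
      (hends Q' hQmem) (Board.red_mono (h₂.trans h₃) hQ₁) hQ₂)
  · exact .inr ⟨P', Q', R', c.2, hperm, .inr rfl, Board.blue_mono h₃ hP₂, hQ₂⟩

/-- Vertex-disjoint blue paths `L` together with red connectors `C` inside `A` for merging them: no
blue path ends in `A`, and the ends of the connectors are distinct and not on the blue paths. -/
structure IsMergeable (B : Board) (A : List ℕ) (k : ℕ) (C : List (ℕ × ℕ)) (L : List (Strand ℕ)) :
    Prop where
  forest : IsForest B.blue L
  isConnector : ∀ c ∈ C, IsConnector B.red A k c
  nodup : (C.flatMap (fun c => [c.1, c.2]) ++ L.flatMap Strand.support).Nodup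
  ends : ∀ P ∈ L, P.first ∉ A ∧ P.last ∉ A

namespace IsMergeable

theorem mono (h : IsMergeable B A k C L) (hB : B ≤ B') : IsMergeable B' A k C L :=
  ⟨h.forest.mono (Board.blue_mono hB), fun c hc => (h.isConnector c hc).mono (Board.red_mono hB),
    h.nodup, h.ends⟩

theorem perm (h : IsMergeable B A k C L) (hL : L.Perm L') : IsMergeable B A k C L' :=
  ⟨h.forest.perm hL, h.isConnector, ((hL.flatMap_right _).append_left _).nodup_iff.1 h.nodup,
    fun P hP => h.ends P (hL.mem_iff.2 hP)⟩

theorem joinAt (h : IsMergeable B A k (c :: C) (P :: Q :: L)) {z : ℕ} (hz : z = c.1 ∨ z = c.2)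
    (hP : B.blue.Adj P.first z) (hQ : B.blue.Adj Q.first z) :
    IsMergeable B A k C (Strand.joinAt z P Q :: L) := by
  have hnodup : (z :: (C.flatMap (fun c => [c.1, c.2]) ++
      (P :: Q :: L).flatMap Strand.support)).Nodup := by
    have h' := h.nodup
    rw [List.flatMap_cons, List.append_assoc] at h'
    rcases hz with rfl | rfl
    · exact h'.sublist ((List.sublist_cons_self _ _).cons_cons _)
    · exact h'.sublist (List.sublist_cons_self _ _)
  have hzL := fun hzL => (List.nodup_cons.1 hnodup).1 (List.mem_append_right _ hzL)
  obtain ⟨hPends, hQends, hLends⟩ : _ ∧ _ ∧ _ := by simpa only [List.forall_mem_cons] using h.ends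
  refine ⟨h.forest.joinAt hzL hP hQ, fun d hd => h.isConnector d (List.mem_cons_of_mem _ hd), ?_,
    List.forall_mem_cons.2 ⟨⟨hPends.2, hQends.2⟩, hLends⟩⟩
  refine List.Perm.nodup (List.Perm.trans List.perm_middle.symm (.append_left _ ?_)) hnodup
  have := (Strand.support_joinAt_perm z P Q).symm.append_right (L.flatMap Strand.support)
  rwa [List.cons_append, List.append_assoc] at this

theorem forces_length_le_two (h : IsMergeable B A k C L) (hk : 2 < k)
    (hL : L.length ≤ 2 + C.length) :
    Forces (fun B' => RedCopy (cycleGraph k) B' ∨ ∃ L', IsForest B'.blue L' ∧ L'.length ≤ 2 ∧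
      (L.flatMap Strand.support).length ≤ (L'.flatMap Strand.support).length) (5 * C.length) B := by
  induction C generalizing B L with
  | nil => exact .win (.inr ⟨L, h.forest, hL, le_rfl⟩)
  | cons c C ih =>
    match L, h, hL with
    | [], h, _ | [_], h, _ | [_, _], h, _ => exact .win (.inr ⟨_, h.forest, by simp, le_rfl⟩)
    | P :: Q :: R :: L, h, hL =>
    rw [List.length_cons, mul_add_one, add_comm]
    refine ((h.isConnector c List.mem_cons_self).forces_blue_pair hk fun P' hP' =>
      (h.ends P' (List.mem_append_left L hP')).1).bind fun B' hB hB' => ?_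
    obtain hred | ⟨P', Q', R', z, hperm, hz, hP', hQ'⟩ := hB'
    · exact .win (.inl hred)
    have hpermL : (P :: Q :: R :: L).Perm (P' :: Q' :: R' :: L) := hperm.append_right L
    refine (ih (((h.mono hB).perm hpermL).joinAt hz hP' hQ') ?_).imp fun B'' _ hB'' =>
      hB''.imp_right ?_
    · simp only [List.length_cons] at hL ⊢
      omega
    · rintro ⟨L', hforest, htwo, hlen⟩
      refine ⟨L', hforest, htwo, le_trans ?_ hlen⟩
      have := (Strand.support_joinAt_perm z P' Q').length_eq
      rw [(hpermL.flatMap_right _).length_eq]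
      simp only [List.flatMap_cons, List.length_append, List.length_cons] at this ⊢
      omega

end IsMergeable

theorem IsPathSeq.isConnector {r : ℕ → ℕ} {N i : ℕ} {G : SimpleGraph ℕ} (h : IsPathSeq G N r)
    (hi : i + k < N) (hA : ∀ j < N, r j ∈ A) : IsConnector G A (k + 2) (r i, r (i + k)) := by
  refine ⟨_, h.traversal (Nat.le_add_right i k) hi, ?_, ?_, fun x hx => ?_⟩
  · refine (List.nodup_map_iff_inj_on (List.Ico.nodup _ _)).2 fun a ha b hb hab => ?_
    rw [List.Ico.mem] at ha hb
    exact h.injOn (Set.mem_Iio.2 (by omega)) (Set.mem_Iio.2 (by omega)) hab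
  · rw [List.length_map, List.Ico.length]
    omega
  · obtain ⟨j, hj, rfl⟩ := List.mem_map.1 hx
    rw [List.Ico.mem] at hj
    exact hA j (by omega)

end Merging

section Linking

variable {B B' : Board} {e : ℕ} {p q : Strand ℕ} {M S T : List (Strand ℕ)}

theorem IsForest.nodup_map_first {V : Type} {G : SimpleGraph V} {L : List (Strand V)}
    (h : IsForest G L) : (L.map Strand.first).Nodup := by
  refine List.pairwise_map.2 ((List.nodup_flatMap.1 h.nodup).2.imp_of_mem ?_)
  intro P Q hP hQ hdisj heq
  exact hdisj (h.traversal P hP).first_mem (heq ▸ (h.traversal Q hQ).first_mem)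

theorem IsForest.last_ne_first {V : Type} {G : SimpleGraph V} {M T : List (Strand V)}
    {p P : Strand V} (h : IsForest G (M ++ p :: T)) (hP : P ∈ M) : p.last ≠ P.first := by
  have hnodup := h.nodup
  rw [List.flatMap_append] at hnodup
  refine fun heq => List.disjoint_of_nodup_append hnodup (List.mem_flatMap.2 ⟨P, hP, ?_⟩)
    (List.mem_flatMap.2 ⟨p, List.mem_cons_self, (h.traversal p (by simp)).last_mem⟩)
  exact heq ▸ (h.traversal P (by simp [hP])).first_mem

theorem support_link_perm {V : Type} (p q : Strand V) (M T : List (Strand V)) :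
    ((M ++ p.append q :: T).flatMap Strand.support).Perm
      ((q :: M ++ p :: T).flatMap Strand.support) := by
  simp only [List.flatMap_append, List.flatMap_cons, Strand.append, ← Multiset.coe_eq_coe,
    ← Multiset.coe_add]
  abel

/-- Disjoint blue paths whose first vertices form a red path, where moreover, from position `e` on,
the last vertex of each path is joined in red to the first vertex of the path before it. This is a
red stack, listed from the bottom, whose bottom paths were modified. -/
structure IsLinkable (B : Board) (e : ℕ) (T : List (Strand ℕ)) : Prop where
  forest : IsForest B.blue T
  firsts : (T.map Strand.first).IsChain B.red.Adj
  lasts : (T.drop e).IsChain fun P Q => B.red.Adj P.first Q.last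

namespace IsLinkable

theorem mono (h : IsLinkable B e T) (hB : B ≤ B') : IsLinkable B' e T :=
  ⟨h.forest.mono (Board.blue_mono hB), h.firsts.imp fun _ _ hab => Board.red_mono hB hab,
    h.lasts.imp fun _ _ hab => Board.red_mono hB hab⟩

theorem lasts_adj (h : IsLinkable B e (q :: M ++ p :: T)) (hM : M.length = e) :
    B.red.Adj ((q :: M).getLast (List.cons_ne_nil q M)).first p.last := by
  have hlasts := h.lasts
  rw [List.drop_append_of_le_length (by rw [List.length_cons]; omega), List.isChain_append]
    at hlasts
  refine hlasts.2.2 _ ?_ p rfl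
  rw [List.getLast?_drop, if_neg (by rw [List.length_cons]; omega)]
  exact List.getLast?_eq_some_getLast _

theorem hasCopy_cycleGraph (he : 0 < e) (h : IsLinkable B e (q :: M ++ p :: T))
    (hM : M.length = e) (hpq : B.red.Adj p.last q.first) :
    HasCopy (cycleGraph (e + 2)) B.red := by
  have hfirsts : Traversal B.red ((q :: M).map Strand.first) q.first
      ((q :: M).getLast (List.cons_ne_nil q M)).first := by
    have hchain := h.firsts
    rw [List.map_append] at hchain
    rw [← List.getLast_map (f := Strand.first) (by simp)]
    exact .of_isChain (by simp) hchain.left_of_append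
  have hnodup : ((q :: M).map Strand.first ++ [p.last]).Nodup := by
    refine (h.forest.sublist (List.sublist_append_left _ _)).nodup_map_first.append
      (List.nodup_singleton _) (List.disjoint_singleton.2 fun hmem => ?_)
    obtain ⟨P, hP, heq⟩ := List.mem_map.1 hmem
    exact h.forest.last_ne_first hP heq.symm
  have hcycle := (hfirsts.append (h.lasts_adj hM) (.singleton _ _)).hasCopy_cycleGraph hnodup
    (by simp only [List.length_append, List.length_map, List.length_cons]; omega) hpq
  rwa [List.length_append, List.length_map, List.length_cons, List.length_singleton, hM] at hcycle

theorem link (h : IsLinkable B e (q :: M ++ p :: T)) (hM : M.length = e)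
    (hpq : B.blue.Adj p.last q.first) : IsLinkable B e (M ++ p.append q :: T) where
  forest := by
    refine ⟨fun P hP => ?_, (support_link_perm p q M T).nodup_iff.2 h.forest.nodup⟩
    have htrav := h.forest.traversal
    rcases List.mem_append.1 hP with hP | hP
    · exact htrav P (by simp [hP])
    rcases List.mem_cons.1 hP with rfl | hP
    · exact (htrav p (by simp)).append hpq (htrav q (by simp))
    · exact htrav P (by simp [hP])
  firsts := by
    have hfirsts := h.firsts.tail
    rw [List.cons_append, List.map_cons, List.tail_cons, List.map_append] at hfirsts
    rwa [List.map_append]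
  lasts := by
    have hlasts := h.lasts.tail
    rw [List.tail_drop, List.cons_append, List.drop_succ_cons, List.drop_left' hM,
      List.isChain_cons] at hlasts
    rw [List.drop_left' hM, List.isChain_cons]
    exact hlasts

theorem forces_length_le (he : 0 < e) (h : IsLinkable B e T) :
    Forces (fun B' => RedCopy (cycleGraph (e + 2)) B' ∨ ∃ L, IsForest B'.blue L ∧
      L.length ≤ e + 1 ∧ (L.flatMap Strand.support).Perm (T.flatMap Strand.support))
      T.length B := by
  induction hN : T.length generalizing T B with
  | zero => exact .win (.inr ⟨T, h.forest, by omega, .refl _⟩)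
  | succ N ih =>
    rcases Nat.lt_or_ge (e + 1) T.length with hlen | hlen
    swap
    · exact .win (.inr ⟨T, h.forest, hlen, .refl _⟩)
    obtain ⟨q, M, p, T, rfl, hM⟩ : ∃ q M p T', T = q :: M ++ p :: T' ∧ M.length = e := by
      obtain ⟨q, T, rfl⟩ := List.exists_cons_of_length_pos (Nat.zero_lt_of_lt hlen)
      rw [List.length_cons] at hlen
      refine ⟨q, T.take e, T[e], T.drop (e + 1), ?_, List.length_take_of_le (by omega)⟩
      rw [← List.drop_eq_getElem_cons, List.cons_append, List.take_append_drop]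
    rw [add_comm N]
    refine (forces_edge (h.forest.last_ne_first List.mem_cons_self)).bind fun B' hB hB' => ?_
    rcases hB' with hred | hblue
    · exact .win (.inl ((h.mono hB).hasCopy_cycleGraph he hM hred))
    refine (ih ((h.mono hB).link hM hblue) (by simpa using hN)).imp fun _ _ => Or.imp_right ?_
    rintro ⟨L, hL, hLlen, hperm⟩
    exact ⟨L, hL, hLlen, hperm.trans (support_link_perm p q M T)⟩

end IsLinkable

end Linking

section RedStacks

variable {B B' : Board} {e m N : ℕ} {r : ℕ → ℕ} {L S : List (Strand ℕ)}

/-- Paths, listed from the top, such that the first vertex of each path is joined in red to both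
ends of the path above it. -/
def IsRedStack (B : Board) (S : List (Strand ℕ)) : Prop :=
  S.IsChain fun P Q => B.red.Adj P.first Q.first ∧ B.red.Adj P.last Q.first

theorem IsRedStack.mono (h : IsRedStack B S) (hB : B ≤ B') : IsRedStack B' S :=
  List.IsChain.imp (fun _ _ hPQ => hPQ.imp (fun h => Board.red_mono hB h)
    fun h => Board.red_mono hB h) h

theorem IsRedStack.isLinkable_reverse (h : IsRedStack B S) (hS : IsForest B.blue S) :
    IsLinkable B e S.reverse where
  forest := hS.perm S.reverse_perm.symm
  firsts := by
    rw [List.isChain_map, List.isChain_reverse]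
    exact List.IsChain.imp (fun _ _ hPQ => hPQ.1.symm) h
  lasts := by
    refine List.IsChain.drop ?_ e
    rw [List.isChain_reverse]
    exact List.IsChain.imp (fun _ _ hPQ => hPQ.2.symm) h

theorem IsPathSeq.nodup_connectors {V : Type} {G : SimpleGraph V} {r : ℕ → V}
    (h : IsPathSeq G (2 * e) r) :
    (((List.range e).map fun i => (r i, r (i + e))).flatMap fun c => [c.1, c.2]).Nodup := by
  rw [List.flatMap_map, List.nodup_flatMap]
  refine ⟨fun i hi => ?_, List.pairwise_lt_range.imp_of_mem fun {i j} hi hj hij => ?_⟩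
  · rw [List.mem_range] at hi
    simpa using h.ne (a := i) (b := i + e) (by omega) (by omega) (by omega)
  · rw [List.mem_range] at hi hj
    have hne : (r j ≠ r i ∧ r j ≠ r (i + e)) ∧ r (j + e) ≠ r i ∧ r (j + e) ≠ r (i + e) := by
      refine ⟨⟨?_, ?_⟩, ?_, ?_⟩ <;> exact h.ne (by omega) (by omega) (by omega)
    simpa [Function.onFun] using hne

theorem IsPathSeq.isMergeable (hr : IsPathSeq B.red (2 * e) r) (hL : IsForest B.blue L)
    (hdisj : ∀ i < 2 * e, r i ∉ L.flatMap Strand.support) :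
    IsMergeable B ((List.range (2 * e)).map r) (e + 2)
      ((List.range e).map fun i => (r i, r (i + e))) L where
  forest := hL
  isConnector c hc := by
    obtain ⟨i, hi, rfl⟩ := List.mem_map.1 hc
    rw [List.mem_range] at hi
    exact hr.isConnector (by omega) fun j hj => List.mem_map_of_mem (List.mem_range.2 hj)
  nodup := by
    refine hr.nodup_connectors.append hL.nodup fun v hv hvL => ?_
    simp only [List.mem_flatMap, List.mem_map, List.mem_range, List.mem_cons, List.not_mem_nil,
      or_false] at hv
    obtain ⟨_, ⟨i, hi, rfl⟩, rfl | rfl⟩ := hv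
    · exact hdisj i (by omega) hvL
    · exact hdisj (i + e) (by omega) hvL
  ends P hP := by
    have hnot : ∀ v ∈ P.support, v ∉ (List.range (2 * e)).map r := by
      intro v hv hmem
      obtain ⟨i, hi, rfl⟩ := List.mem_map.1 hmem
      exact hdisj i (List.mem_range.1 hi) (List.mem_flatMap.2 ⟨P, hP, hv⟩)
    exact ⟨hnot _ (hL.traversal P hP).first_mem, hnot _ (hL.traversal P hP).last_mem⟩

theorem IsRedStack.forces_length_le_two (he : 0 < e) (hS : IsRedStack B S)
    (hF : IsForest B.blue S) (hr : IsPathSeq B.red (2 * e) r)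
    (hdisj : ∀ i < 2 * e, r i ∉ S.flatMap Strand.support) :
    Forces (fun B' => RedCopy (cycleGraph (e + 2)) B' ∨ ∃ L, IsForest B'.blue L ∧ L.length ≤ 2 ∧
      (S.flatMap Strand.support).length ≤ (L.flatMap Strand.support).length)
      (S.length + 5 * e) B := by
  have hlink := (hS.isLinkable_reverse (e := e) hF).forces_length_le he
  rw [List.length_reverse] at hlink
  refine hlink.bind fun B₁ hB₁ h₁ => ?_
  obtain hred | ⟨L, hL, hlen, hperm⟩ := h₁
  · exact .win (.inl hred)
  have hperm := hperm.trans (S.reverse_perm.flatMap_right _)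
  have hmerge := (hr.mono (Board.red_mono hB₁)).isMergeable hL fun i hi hmem =>
    hdisj i hi (hperm.mem_iff.1 hmem)
  have hforces := hmerge.forces_length_le_two (by omega)
    (by rw [List.length_map, List.length_range]; omega)
  rwa [List.length_map, List.length_range, hperm.length_eq] at hforces

theorem IsRedStack.forces_blue_path (hm : 2 ≤ m) (hS : IsRedStack B S) (hF : IsForest B.blue S)
    (hr : IsPathSeq B.red (4 * m - 4) r) (hdisj : ∀ i < 4 * m - 4, r i ∉ S.flatMap Strand.support)
    (hlen : N + 2 * m ≤ (S.flatMap Strand.support).length + 2) :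
    Forces (WinCP (2 * m) N) (S.length + 12 * m) B := by
  have htwo : 4 * m - 4 = 2 * (2 * m - 2) := by omega
  rw [htwo] at hr hdisj
  have hforces := hS.forces_length_le_two (by omega) hF hr hdisj
  rw [Nat.sub_add_cancel (by omega)] at hforces
  refine (hforces.bind (t := 2 * m) fun B' _ hB' => ?_).mono (by omega)
  obtain hred | ⟨L, hL, hLlen, hle⟩ := hB'
  · exact .win (.inl hred)
  · exact forces_of_length_le_two hm hL hLlen (by omega)

end RedStacks

theorem exists_notMem_list {α : Type*} [Infinite α] (l : List α) : ∃ a, a ∉ l := by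
  classical
  obtain ⟨a, ha⟩ := Infinite.exists_notMem_finset l.toFinset
  exact ⟨a, by simpa using ha⟩

section Trunks

variable {V : Board → Prop} {B B' : Board} {m n t C N : ℕ} {r : ℕ → ℕ} {W P : Strand ℕ}
  {S : List (Strand ℕ)} {A : List ℕ}

/-- A red stack `S` of disjoint blue paths with a further blue path `W` on which Builder works. The
last vertex of `W` is already joined in red to the stack, unless it is also the first one. -/
structure IsTrunk (B : Board) (W : Strand ℕ) (S : List (Strand ℕ)) : Prop where
  forest : IsForest B.blue (W :: S)
  isRedStack : IsRedStack B S
  last : ∀ Q ∈ S.head?, W.last = W.first ∨ B.red.Adj W.last Q.first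

namespace IsTrunk

theorem mono (h : IsTrunk B W S) (hB : B ≤ B') : IsTrunk B' W S :=
  ⟨h.forest.mono (Board.blue_mono hB), h.isRedStack.mono hB,
    fun Q hQ => (h.last Q hQ).imp_right fun hW => Board.red_mono hB hW⟩

theorem isRedStack_cons (h : IsTrunk B W S) (hW : ∀ Q ∈ S.head?, B.red.Adj W.first Q.first) :
    IsRedStack B (W :: S) := by
  refine List.isChain_cons.2 ⟨fun Q hQ => ⟨hW Q hQ, ?_⟩, h.isRedStack⟩
  rcases h.last Q hQ with heq | hred
  · exact heq ▸ hW Q hQ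
  · exact hred

theorem push (h : IsTrunk B W S) (hW : ∀ Q ∈ S.head?, B.red.Adj W.first Q.first) {v : ℕ}
    (hv : v ∉ (W :: S).flatMap Strand.support) : IsTrunk B (Strand.singleton v) (W :: S) where
  forest := ⟨List.forall_mem_cons.2 ⟨Traversal.singleton _ v, h.forest.traversal⟩,
    h.forest.nodup.cons hv⟩
  isRedStack := h.isRedStack_cons hW
  last _ _ := .inl rfl

theorem support_absorb_perm (W P : Strand ℕ) (S : List (Strand ℕ)) :
    ((W.reverse.append P :: S).flatMap Strand.support).Perm
      ((W :: P :: S).flatMap Strand.support) := by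
  simp only [List.flatMap_cons, Strand.append, Strand.reverse, List.append_assoc]
  exact (List.reverse_perm _).append_right _

theorem absorb (h : IsTrunk B W (P :: S)) (hWP : B.blue.Adj W.first P.first) :
    IsTrunk B (W.reverse.append P) S where
  forest := by
    obtain ⟨hW, hP, hS⟩ : _ ∧ _ ∧ _ := by
      simpa only [List.forall_mem_cons] using h.forest.traversal
    refine ⟨List.forall_mem_cons.2 ⟨hW.reverse.append hWP hP, hS⟩, ?_⟩
    exact (support_absorb_perm W P S).nodup_iff.2 h.forest.nodup
  isRedStack := h.isRedStack.tail
  last Q hQ := .inr ((List.isChain_cons.1 h.isRedStack).1 Q hQ).2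

theorem ne (h : IsTrunk B W (P :: S)) : W.first ≠ P.first := by
  intro heq
  have hnodup := h.forest.nodup
  rw [List.flatMap_cons] at hnodup
  refine List.disjoint_of_nodup_append hnodup (h.forest.traversal W (by simp)).first_mem
    (List.mem_flatMap.2 ⟨P, by simp, ?_⟩)
  exact heq ▸ (h.forest.traversal P (by simp)).first_mem

-- Every answer increases `2 * v - |S|` by one, `v` being the number of vertices of the trunk: a red
-- one adds a vertex and a path, a blue one removes a path.
theorem forces_of_forces_stack (h : IsTrunk B W S)
    (hA : A.Disjoint ((W :: S).flatMap Strand.support))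
    (hV : ∀ B' S', B ≤ B' → IsForest B'.blue S' → IsRedStack B' S' →
      A.Disjoint (S'.flatMap Strand.support) → n ≤ (S'.flatMap Strand.support).length →
        Forces V (S'.length + C) B')
    (hlen : ((W :: S).flatMap Strand.support).length ≤ n)
    (ht : 2 * n + S.length + 2 ≤ t + 2 * ((W :: S).flatMap Strand.support).length) :
    Forces V (t + C) B := by
  induction t generalizing B W S with
  | zero => omega
  | succ t ih =>
    have forces_of_push (B') (hB : B ≤ B') (hW : ∀ Q ∈ S.head?, B'.red.Adj W.first Q.first) :
        Forces V (t + C) B' := by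
      have h' := h.mono hB
      rcases Nat.lt_or_ge ((W :: S).flatMap Strand.support).length n with hlt | hge
      swap
      · refine (hV B' _ hB h'.forest (h'.isRedStack_cons hW) hA hge).mono ?_
        rw [List.length_cons]
        omega
      obtain ⟨v, hv⟩ := exists_notMem_list (A ++ (W :: S).flatMap Strand.support)
      rw [List.mem_append, not_or] at hv
      refine ih (h'.push hW hv.2) (List.disjoint_cons_right.2 ⟨hv.1, hA⟩)
        (fun B'' S' hB' => hV B'' S' (hB.trans hB')) hlt ?_
      change _ ≤ _ + 2 * (((W :: S).flatMap Strand.support).length + 1)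
      rw [List.length_cons]
      omega
    rcases S with _ | ⟨P, S⟩
    · exact (forces_of_push B le_rfl (by simp)).mono (by omega)
    rw [add_right_comm, add_comm _ 1]
    refine (forces_edge h.ne).bind fun B' hB hB' => ?_
    rcases hB' with hred | hblue
    · exact forces_of_push B' hB (by simpa using hred)
    · have hperm := support_absorb_perm W P S
      refine ih ((h.mono hB).absorb hblue) (fun v hv hvW => hA hv (hperm.mem_iff.1 hvW))
        (fun B'' S' hB' => hV B'' S' (hB.trans hB')) (hperm.length_eq.trans_le hlen) ?_
      rw [hperm.length_eq]
      rw [List.length_cons] at ht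
      omega

end IsTrunk

theorem forces_blue_path_of_red_path (hm : 2 ≤ m) (hr : IsPathSeq B.red (4 * m - 4) r)
    (hP : IsForest B.blue [P]) (hdisj : ∀ i < 4 * m - 4, r i ∉ P.support)
    (ht : 2 * N + 16 * m ≤ t + 2 * P.support.length + 3) : Forces (WinCP (2 * m) N) t B := by
  have hnodup := hP.nodup
  rw [List.flatMap_singleton] at hnodup
  rcases Nat.lt_or_ge P.support.length N with hlt | hge
  swap
  · exact .win (.inr ((hP.traversal P (by simp)).hasCopy_pathGraph hnodup hge))
  set A := (List.range (4 * m - 4)).map r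
  have hmem : ∀ i < 4 * m - 4, r i ∈ A := fun i hi => List.mem_map_of_mem (List.mem_range.2 hi)
  have hAP : A.Disjoint P.support := fun v hv hvP => by
    obtain ⟨i, hi, rfl⟩ := List.mem_map.1 hv
    exact hdisj i (List.mem_range.1 hi) hvP
  obtain ⟨v, hv⟩ := exists_notMem_list (A ++ P.support)
  rw [List.mem_append, not_or] at hv
  have htrunk : IsTrunk B (Strand.singleton v) [P] := by
    refine ⟨⟨List.forall_mem_cons.2 ⟨.singleton _ v, hP.traversal⟩, hP.nodup.cons ?_⟩,
      List.isChain_singleton _, fun _ _ => .inl rfl⟩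
    simpa using hv.2
  have hsupport : [Strand.singleton v, P].flatMap Strand.support = v :: P.support := by
    simp [Strand.singleton]
  refine (htrunk.forces_of_forces_stack (A := A) (t := t - 12 * m) (C := 12 * m)
    (n := N + 2 * m - 2) ?_ ?_ ?_ ?_).mono (by omega)
  · rw [hsupport]
    exact List.disjoint_cons_right.2 ⟨hv.1, hAP⟩
  · intro B' S hB hF hS hAS hlen
    exact hS.forces_blue_path hm hF (hr.mono (Board.red_mono hB))
      (fun i hi => hAS (hmem i hi)) (by omega)
  · rw [hsupport, List.length_cons]
    omega
  · rw [hsupport]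
    simp only [List.length_cons, List.length_nil]
    omega

end Trunks

section Growth

variable {B B' : Board} {m f N : ℕ} {R L : List ℕ} {v w : ℕ}

/-- Disjoint red and blue paths, either of which may be empty. -/
structure IsRedBluePair (B : Board) (R L : List ℕ) : Prop where
  red : R.IsChain B.red.Adj
  blue : L.IsChain B.blue.Adj
  nodup : (R ++ L).Nodup

namespace IsRedBluePair

theorem exists_cons (h : IsRedBluePair B R L) :
    ∃ v R' w L', IsRedBluePair B (v :: R') (w :: L') ∧
      R.length + L.length ≤ (v :: R').length + (w :: L').length ∧
      (v :: R').length ≤ max R.length 1 := by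
  obtain ⟨u, hu⟩ := exists_notMem_list (R ++ L)
  rcases R with _ | ⟨v, R⟩ <;> rcases L with _ | ⟨w, L⟩
  · obtain ⟨u', hu'⟩ := exists_notMem_list [u]
    exact ⟨u', [], u, [], ⟨.singleton _, .singleton _, (List.nodup_singleton u).cons hu'⟩,
      by simp, by simp⟩
  · exact ⟨u, [], w, L, ⟨.singleton _, h.blue, h.nodup.cons hu⟩, by simp, by simp⟩
  · rw [List.append_nil] at hu
    have hnodup := h.nodup
    rw [List.append_nil] at hnodup
    refine ⟨v, R, u, [], ⟨h.red, .singleton _, ?_⟩, by simp, le_max_left _ _⟩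
    exact (List.perm_append_singleton u _).nodup_iff.2 (hnodup.cons hu)
  · exact ⟨v, R, w, L, h, le_rfl, le_max_left _ _⟩

theorem forces_step (h : IsRedBluePair B (v :: R) (w :: L)) :
    Forces (fun B' => ∃ R' L', IsRedBluePair B' R' L' ∧
      R'.length + L'.length = R.length + L.length + 3 ∧ R'.length ≤ R.length + 3) 2 B := by
  obtain ⟨u, hu⟩ := exists_notMem_list (v :: R ++ w :: L)
  have hnodup := h.nodup.cons hu
  have huv : u ≠ v := fun h => hu (by simp [h])
  have huw : u ≠ w := fun h => hu (by simp [h])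
  have hvw : v ≠ w := (List.nodup_append.1 h.nodup).2.2 v (by simp) w (by simp)
  refine (forces_edge hvw).bind (t := 1) fun B₁ hB₁ hvw => ?_
  rcases hvw with hvw | hvw
  · refine (forces_edge huw).imp fun B₂ hB₂ huw => ?_
    have hred := h.red.imp fun _ _ h => Board.red_mono (hB₁.trans hB₂) h
    have hblue := h.blue.imp fun _ _ h => Board.blue_mono (hB₁.trans hB₂) h
    rcases huw with huw | huw
    · exact ⟨u :: w :: v :: R, L, ⟨(hred.cons_cons (Board.red_mono hB₂ hvw).symm).cons_cons huw,
        hblue.tail, (List.perm_middle.symm.cons u).nodup_iff.2 hnodup⟩,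
        by simp only [List.length_cons]; omega, by simp⟩
    · exact ⟨v :: R, u :: w :: L, ⟨hred, hblue.cons_cons huw,
        List.perm_middle.nodup_iff.2 hnodup⟩, by simp only [List.length_cons]; omega, by simp⟩
  · refine (forces_edge huv).imp fun B₂ hB₂ huv => ?_
    have hred := h.red.imp fun _ _ h => Board.red_mono (hB₁.trans hB₂) h
    have hblue := h.blue.imp fun _ _ h => Board.blue_mono (hB₁.trans hB₂) h
    rcases huv with huv | huv
    · exact ⟨u :: v :: R, w :: L, ⟨hred.cons_cons huv, hblue, hnodup⟩,
        by simp only [List.length_cons]; omega, by simp⟩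
    · exact ⟨R, u :: v :: w :: L, ⟨hred.tail,
        (hblue.cons_cons (Board.blue_mono hB₂ hvw)).cons_cons huv,
        (List.perm_middle.trans (List.perm_middle.cons u)).nodup_iff.2 hnodup⟩,
        by simp only [List.length_cons]; omega, by simp⟩

theorem forces_blue_path_of_le (hm : 2 ≤ m) (h : IsRedBluePair B R L) (hL : L ≠ [])
    (hR : 4 * m - 4 ≤ R.length) (hf : 2 * N + 16 * m ≤ f + 2 * L.length + 3) :
    Forces (WinCP (2 * m) N) f B := by
  obtain ⟨hRnodup, hLnodup, hdisj⟩ := List.nodup_append.1 h.nodup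
  rcases eq_or_ne R [] with rfl | hne
  · rw [List.length_nil] at hR
    omega
  obtain ⟨r, hr, hmem⟩ := (Traversal.of_isChain hne h.red).exists_isPathSeq hRnodup
  have hr' : IsPathSeq B.red (4 * m - 4) r := by
    simpa only [zero_add] using hr.shift (a := 0) (M := 4 * m - 4) (by omega)
  refine forces_blue_path_of_red_path (P := ⟨L.head hL, L.getLast hL, L⟩) hm hr'
    ⟨?_, ?_⟩ (fun i hi hiL => ?_) hf
  · exact List.forall_mem_singleton.2 (Traversal.of_isChain hL h.blue)
  · rwa [List.flatMap_singleton]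
  · exact hdisj _ (List.mem_of_mem_drop (hmem i (by omega)).first_mem) _ hiL rfl

theorem forces_blue_path (hm : 2 ≤ m) (h : IsRedBluePair B R L) (hR : R.length ≤ 4 * m - 3)
    (hf : 2 * N + 24 * m ≤ f + 2 * (R.length + L.length) + 2) :
    Forces (WinCP (2 * m) N) f B := by
  induction f using Nat.strong_induction_on generalizing B R L with
  | _ f ih =>
  obtain ⟨v, R', w, L', h', hle, hR'⟩ := h.exists_cons
  have hne : w :: L' ≠ [] := List.cons_ne_nil _ _
  rcases Nat.lt_or_ge (w :: L').length N with hlt | hge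
  swap
  · have hnodup := (List.nodup_append.1 h'.nodup).2.1
    exact .win (.inr ((Traversal.of_isChain hne h'.blue).hasCopy_pathGraph hnodup hge))
  rcases Nat.lt_or_ge (v :: R').length (4 * m - 4) with hshort | hlong
  swap
  · exact h'.forces_blue_path_of_le hm hne hlong (by omega)
  rw [List.length_cons] at hle hR' hlt hshort
  rw [List.length_cons] at hle
  obtain ⟨g, rfl⟩ : ∃ g, f = 2 + g := ⟨f - 2, by omega⟩
  refine h'.forces_step.bind fun B' _ ⟨R'', L'', h'', hlen, hle'⟩ => ?_
  exact ih g (by omega) h'' (by omega) (by omega)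

end IsRedBluePair

theorem forces_blue_path_emptyBoard (hm : 2 ≤ m) (N : ℕ) :
    Forces (WinCP (2 * m) N) (2 * N + 24 * m - 2) emptyBoard :=
  IsRedBluePair.forces_blue_path (R := []) (L := []) hm ⟨.nil, .nil, List.nodup_nil⟩ (by simp)
    (by simp only [List.length_nil]; omega)

end Growth

/-- For every even `k ≥ 4` and `n ≥ 3k`, `r̃(C_k, C_n) ≤ 2n + 20k`. -/
theorem online_ramsey_even_cycle (k n : ℕ) (hk : 4 ≤ k) (hke : Even k)
    (hn : 3 * k ≤ n) :
    BuilderWinsIn emptyBoard (WinCC k n) (2 * n + 20 * k) := by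
  obtain ⟨m, rfl⟩ := hke.two_dvd
  have hm : 2 ≤ m := by omega
  have hempty : emptyBoard.colored.Finite := by simp [emptyBoard, Board.colored]
  refine Forces.builderWinsIn hempty
    (((forces_blue_path_emptyBoard hm (n + 3 * m + 1)).bind fun B _ hB => ?_).mono
      (s := 2 * (n + 3 * m + 1) + 24 * m - 2 + 10 * m) (by omega))
  rcases hB with hred | hblue
  · exact .win (.inl hred)
  · obtain ⟨p, hp⟩ := exists_isPathSeq_of_hasCopy hblue
    exact forces_of_blue_path hm (by omega) hp
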